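/- If G is a graph with connected components B_1, ..., B_k, then φ(G) = Σ_{i=1}^k φ(B_i) − (k − 1). -/

import Mathlib

/-- Two finite sets overlap: they intersect and neither contains the other. -/
def Overlaps (A B : Finset ℕ) : Prop :=
  (A ∩ B).Nonempty ∧ ¬ A ⊆ B ∧ ¬ B ⊆ A

/-- An overlap representation of a graph: nonempty sets assigned to vertices such that
two vertices are adjacent iff their sets overlap. -/
def IsOverlapRep {V : Type*} (G : SimpleGraph V) (S : V → Finset ℕ) : Prop :=
  (∀ v, (S v).Nonempty) ∧ ∀ u v, G.Adj u v ↔ Overlaps (S u) (S v)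

/-- The overlap number: the minimum number of elements used in an overlap representation. -/
noncomputable def overlapNumber {V : Type*} (G : SimpleGraph V) : ℕ :=
  sInf {n | ∃ S : V → Finset ℕ, IsOverlapRep G S ∧ (⋃ v, (S v : Set ℕ)).ncard = n}

/-!
If no set of a representation of `G` splits the ground set `U` of a representation of `H` (each
either contains `U` or misses it), then `U` can be shrunk to a single point of itself inside the
sets of `G` without changing which of them overlap; conversely, a point used by `G` can be blown up
to `U`. Gluing and separating representations this way saves exactly one label, so it remains to
see that every representation of a disconnected graph has a component whose ground set is not split
by the other components. A component whose largest set is as small as possible will do: a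
connected component with one set inside a given set that it does not overlap lies there entirely.
-/

open Finset

theorem overlaps_comm {A B : Finset ℕ} : Overlaps A B ↔ Overlaps B A := by
  rw [Overlaps, Overlaps, inter_comm, and_comm (a := ¬A ⊆ B)]

theorem overlaps_map_iff (e : ℕ ↪ ℕ) {A B : Finset ℕ} :
    Overlaps (A.map e) (B.map e) ↔ Overlaps A B := by
  simp only [Overlaps, ← map_inter, map_nonempty, map_subset_map]

theorem not_overlaps_of_subset_or_disjoint {A B U : Finset ℕ} (hBU : B ⊆ U)
    (hA : U ⊆ A ∨ Disjoint U A) : ¬Overlaps A B := by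
  rintro ⟨hAB, -, hBA⟩
  rcases hA with hUA | hUA
  · exact hBA (hBU.trans hUA)
  · exact not_disjoint_iff_nonempty_inter.2 hAB (hUA.mono_left hBU).symm

theorem overlaps_sdiff_erase_iff {A B U : Finset ℕ} {x : ℕ} (hx : x ∈ U)
    (hA : U ⊆ A ∨ Disjoint U A) (hB : U ⊆ B ∨ Disjoint U B) :
    Overlaps (A \ U.erase x) (B \ U.erase x) ↔ Overlaps A B := by
  have sdiff_subset_iff {A B : Finset ℕ} (hA : U ⊆ A ∨ Disjoint U A)
      (hB : U ⊆ B ∨ Disjoint U B) : A \ U.erase x ⊆ B \ U.erase x ↔ A ⊆ B := by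
    simp only [subset_iff, disjoint_left, mem_sdiff, mem_erase] at *
    grind
  have inter_nonempty_iff :
      ((A \ U.erase x) ∩ (B \ U.erase x)).Nonempty ↔ (A ∩ B).Nonempty := by
    simp only [Finset.Nonempty, subset_iff, disjoint_left, mem_sdiff, mem_erase, mem_inter] at *
    grind
  rw [Overlaps, Overlaps, sdiff_subset_iff hA hB, sdiff_subset_iff hB hA,
    inter_nonempty_iff]

theorem sdiff_erase_nonempty_iff {A U : Finset ℕ} {x : ℕ} (hx : x ∈ U)
    (hA : U ⊆ A ∨ Disjoint U A) : (A \ U.erase x).Nonempty ↔ A.Nonempty := by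
  simp only [Finset.Nonempty, subset_iff, disjoint_left, mem_sdiff, mem_erase] at *
  grind

theorem exists_embedding_inter_map_eq_singleton {L M : Finset ℕ} (hL : L.Nonempty)
    (hM : M.Nonempty) : ∃ (e : ℕ ↪ ℕ) (x : ℕ), L ∩ M.map e = {x} := by
  obtain ⟨x, hx⟩ := hL
  obtain ⟨y, hy⟩ := hM
  obtain ⟨N, hN⟩ : ∃ N, ∀ a ∈ L, a < N :=
    ⟨L.sup id + 1, fun a ha => Nat.lt_succ_of_le (le_sup (f := id) ha)⟩
  have hxN := hN x hx
  let f (n : ℕ) : ℕ := if n = y then x else N + n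
  have hf : Function.Injective f := fun a b hab => by
    simp only [f] at hab
    split_ifs at hab <;> omega
  refine ⟨⟨f, hf⟩, x, Subset.antisymm (fun a ha => ?_) (singleton_subset_iff.2 ?_)⟩
  · obtain ⟨haL, haM⟩ := mem_inter.1 ha
    obtain ⟨n, -, rfl⟩ := mem_map.1 haM
    have hfN : f n < N := hN _ haL
    simp only [Function.Embedding.coeFn_mk, mem_singleton, f] at hfN ⊢
    split_ifs at hfN ⊢ <;> omega
  · exact mem_inter.2 ⟨hx, mem_map.2 ⟨y, hy, if_pos rfl⟩⟩

section Labels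

variable {V W : Type*} [Fintype V] [Fintype W]

/-- The ground set of a family of finite sets, that is, the union of its members. Its cardinality
is the quantity minimized by `overlapNumber`. -/
def labels (S : V → Finset ℕ) : Finset ℕ :=
  univ.biUnion S

theorem subset_labels (S : V → Finset ℕ) (v : V) : S v ⊆ labels S :=
  subset_biUnion_of_mem S (mem_univ v)

theorem labels_subset_iff {S : V → Finset ℕ} {U : Finset ℕ} :
    labels S ⊆ U ↔ ∀ v, S v ⊆ U := by
  simp only [labels, biUnion_subset, mem_univ, forall_const]

theorem disjoint_labels_left {S : V → Finset ℕ} {U : Finset ℕ} :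
    Disjoint (labels S) U ↔ ∀ v, Disjoint (S v) U := by
  simp only [labels, disjoint_biUnion_left, mem_univ, forall_const]

theorem labels_map (S : V → Finset ℕ) (e : ℕ ↪ ℕ) :
    labels (fun v => (S v).map e) = (labels S).map e := by
  simp only [labels, map_eq_image, biUnion_image]

theorem labels_comp_subset (S : W → Finset ℕ) (f : V → W) : labels (S ∘ f) ⊆ labels S :=
  labels_subset_iff.2 fun v => subset_labels S (f v)

theorem ncard_iUnion_eq_card_labels (S : V → Finset ℕ) :
    (⋃ v, (S v : Set ℕ)).ncard = #(labels S) := by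
  rw [← Set.ncard_coe_finset]
  simp only [labels, coe_biUnion, coe_univ, Set.mem_univ, Set.iUnion_true]

end Labels

section Representations

variable {V W : Type*} {G : SimpleGraph V} {H : SimpleGraph W}
  {S : V → Finset ℕ} {T : W → Finset ℕ}

namespace IsOverlapRep

theorem map (hS : IsOverlapRep G S) (e : ℕ ↪ ℕ) : IsOverlapRep G fun v => (S v).map e :=
  ⟨fun v => (hS.1 v).map, fun u v => (hS.2 u v).trans (overlaps_map_iff e).symm⟩

theorem comp_embedding (hT : IsOverlapRep H T) (f : G ↪g H) : IsOverlapRep G (T ∘ f) :=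
  ⟨fun v => hT.1 (f v), fun u v => f.map_adj_iff.symm.trans (hT.2 (f u) (f v))⟩

theorem sumElim (hS : IsOverlapRep G S) (hT : IsOverlapRep H T)
    (hST : ∀ v w, ¬Overlaps (S v) (T w)) : IsOverlapRep (G ⊕g H) (Sum.elim S T) := by
  refine ⟨Sum.forall.2 ⟨hS.1, hT.1⟩, ?_⟩
  rintro (u | u) (v | v)
  · exact SimpleGraph.sum_adj_inl.trans (hS.2 u v)
  · exact iff_of_false (by simp) (hST u v)
  · exact iff_of_false (by simp) (overlaps_comm.not.1 (hST v u))
  · exact SimpleGraph.sum_adj_inr.trans (hT.2 u v)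

theorem labels_nonempty [Fintype V] [Nonempty V] (hS : IsOverlapRep G S) : (labels S).Nonempty :=
  (hS.1 (Classical.arbitrary V)).mono (subset_labels S _)

theorem sdiff_erase_iff {U : Finset ℕ} {x : ℕ} (hx : x ∈ U)
    (hSU : ∀ v, U ⊆ S v ∨ Disjoint U (S v)) :
    IsOverlapRep G (fun v => S v \ U.erase x) ↔ IsOverlapRep G S := by
  simp only [IsOverlapRep, sdiff_erase_nonempty_iff hx (hSU _),
    overlaps_sdiff_erase_iff hx (hSU _) (hSU _)]

theorem exists_blowup (hS : IsOverlapRep G S) {U : Finset ℕ} {x : ℕ} (hx : x ∈ U)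
    (hSU : ∀ v, S v ∩ U ⊆ {x}) :
    ∃ R : V → Finset ℕ, IsOverlapRep G R ∧ (∀ v, U ⊆ R v ∨ Disjoint U (R v)) ∧
      ∀ v, R v ⊆ S v ∪ U := by
  let R (v : V) : Finset ℕ := if x ∈ S v then S v ∪ U else S v
  have eq_of_mem {v : V} {a : ℕ} (haS : a ∈ S v) (haU : a ∈ U) : a = x :=
    mem_singleton.1 (hSU v (mem_inter.2 ⟨haS, haU⟩))
  have hRU (v : V) : U ⊆ R v ∨ Disjoint U (R v) := by
    by_cases hxv : x ∈ S v
    · exact .inl (by simp only [R, if_pos hxv, subset_union_right])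
    · simp only [R, if_neg hxv]
      exact .inr (disjoint_right.2 fun a haS haU => hxv (eq_of_mem haS haU ▸ haS))
  have sdiff_eq (v : V) : R v \ U.erase x = S v := by
    ext a
    simp only [R, mem_sdiff, mem_erase]
    grind
  refine ⟨R, (sdiff_erase_iff hx hRU).1 (by simpa only [sdiff_eq] using hS), hRU,
    fun v => ?_⟩
  simp only [R]
  split_ifs
  · exact Subset.rfl
  · exact subset_union_left

theorem forall_subset_of_subset (hS : IsOverlapRep G S) (hG : G.Preconnected) {X : Finset ℕ}
    (hX : ∀ v, ¬Overlaps (S v) X) {u : V} (hu : S u ⊆ X) (v : V) : S v ⊆ X := by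
  obtain ⟨p⟩ := hG u v
  induction p with
  | nil => exact hu
  | @cons a b _ hab _ ih =>
    apply ih
    obtain ⟨⟨z, hz⟩, hnot, -⟩ := (hS.2 a b).1 hab
    obtain ⟨hza, hzb⟩ := mem_inter.1 hz
    by_contra hbX
    exact hX b ⟨⟨z, mem_inter.2 ⟨hzb, hu hza⟩⟩, hbX, fun hXb => hnot (hu.trans hXb)⟩

theorem eq_of_forall_subset (hS : IsOverlapRep G S) (hG : G.Preconnected) {m : V}
    (hm : ∀ v, S v ⊆ S m) (v : V) : v = m := by
  obtain ⟨p⟩ := hG m v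
  cases p with
  | nil => rfl
  | cons hadj => exact absurd (hm _) ((hS.2 _ _).1 hadj).2.2

theorem subset_or_disjoint_of_card_le (hS : IsOverlapRep G S) (hT : IsOverlapRep H T)
    (hG : G.Preconnected) (hH : H.Preconnected) (hST : ∀ v w, ¬Overlaps (S v) (T w))
    (hcard : ∀ v, ∃ w, #(S v) ≤ #(T w)) (w : W) :
    (∀ v, S v ⊆ T w) ∨ ∀ v, Disjoint (S v) (T w) := by
  by_contra! ⟨⟨a, ha⟩, b, hb⟩
  have not_subset (v : V) : ¬S v ⊆ T w := fun hv =>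
    ha (hS.forall_subset_of_subset hG (hST · w) hv a)
  have hwb : T w ⊆ S b := by
    by_contra hwb
    exact hST b w ⟨not_disjoint_iff_nonempty_inter.1 hb, not_subset b, hwb⟩
  have forall_subset : ∀ z, T z ⊆ S b :=
    hT.forall_subset_of_subset hH (fun z => overlaps_comm.not.1 (hST b z)) hwb
  obtain ⟨m, hm⟩ := hcard b
  have hmb : T m = S b := eq_of_subset_of_card_le (forall_subset m) hm
  have hwm : w = m := hT.eq_of_forall_subset hH (fun z => hmb ▸ forall_subset z) w
  exact not_subset b (hwm ▸ hmb.ge)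

theorem exists_forall_subset_or_disjoint {ι : Type*} [Finite ι] [Nonempty ι] {V : ι → Type*}
    [∀ i, Finite (V i)] {G : ∀ i, SimpleGraph (V i)} {S : ∀ i, V i → Finset ℕ}
    (hS : ∀ i, IsOverlapRep (G i) (S i)) (hG : ∀ i, (G i).Connected)
    (hcross : ∀ i j, i ≠ j → ∀ u v, ¬Overlaps (S i u) (S j v)) :
    ∃ i, ∀ j, j ≠ i → ∀ w, (∀ v, S i v ⊆ S j w) ∨ ∀ v, Disjoint (S i v) (S j w) := by
  have exists_max (i : ι) : ∃ m, ∀ v, #(S i v) ≤ #(S i m) :=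
    have := (hG i).nonempty
    Finite.exists_max fun v => #(S i v)
  choose m hm using exists_max
  obtain ⟨i, hi⟩ := Finite.exists_min fun i => #(S i (m i))
  exact ⟨i, fun j hji => (hS i).subset_or_disjoint_of_card_le (hS j) (hG i).preconnected
    (hG j).preconnected (hcross i j hji.symm) fun v => ⟨m j, (hm i v).trans (hi j)⟩⟩

end IsOverlapRep

theorem exists_isOverlapRep [Finite V] (G : SimpleGraph V) :
    ∃ S : V → Finset ℕ, IsOverlapRep G S := by
  classical
  have := Fintype.ofFinite V
  obtain ⟨f, hf⟩ := Countable.exists_injective_nat (Sym2 V)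
  let E (v : V) : Finset (Sym2 V) := insert s(v, v) (G.incidenceFinset v)
  have mem_E {e : Sym2 V} {v : V} : e ∈ E v ↔ e = s(v, v) ∨ e ∈ G.incidenceSet v := by
    simp only [E, mem_insert, SimpleGraph.mem_incidenceFinset]
  have not_subset {u v : V} (huv : u ≠ v) : ¬E u ⊆ E v := fun h => by
    simpa [mem_E, SimpleGraph.mk'_mem_incidenceSet_iff, huv] using h (mem_insert_self _ _)
  have inter_nonempty_iff {u v : V} (huv : u ≠ v) : (E u ∩ E v).Nonempty ↔ G.Adj u v := by
    refine ⟨fun ⟨e, he⟩ => ?_, fun hadj => ⟨s(u, v), mem_inter.2 ⟨?_, ?_⟩⟩⟩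
    · obtain ⟨hu, hv⟩ := mem_inter.1 he
      rcases mem_E.1 hu with rfl | hu <;> rcases mem_E.1 hv with hv | hv
      · simp_all
      · simp [SimpleGraph.mk'_mem_incidenceSet_iff] at hv
      · simp [hv, SimpleGraph.mk'_mem_incidenceSet_iff] at hu
      · exact G.adj_of_mem_incidenceSet huv hu hv
    · exact mem_E.2 (.inr (G.mk'_mem_incidenceSet_left_iff.2 hadj))
    · exact mem_E.2 (.inr (G.mk'_mem_incidenceSet_right_iff.2 hadj))
  refine ⟨fun v => (E v).image f, fun v => (insert_nonempty _ _).image f, fun u v => ?_⟩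
  rw [Overlaps, ← image_inter _ _ hf, image_nonempty, image_subset_image_iff hf,
    image_subset_image_iff hf]
  rcases eq_or_ne u v with rfl | huv
  · simp
  · simp [inter_nonempty_iff huv, not_subset huv, not_subset huv.symm]

theorem overlapNumber_le_card_labels [Fintype V] (hS : IsOverlapRep G S) :
    overlapNumber G ≤ #(labels S) :=
  Nat.sInf_le ⟨S, hS, ncard_iUnion_eq_card_labels S⟩

theorem exists_isOverlapRep_card_labels_eq [Fintype V] (G : SimpleGraph V) :
    ∃ S : V → Finset ℕ, IsOverlapRep G S ∧ #(labels S) = overlapNumber G := by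
  obtain ⟨S₀, hS₀⟩ := exists_isOverlapRep G
  obtain ⟨S, hS, hcard⟩ := Nat.sInf_mem (s := {n | ∃ S : V → Finset ℕ, IsOverlapRep G S ∧
    (⋃ v, (S v : Set ℕ)).ncard = n}) ⟨_, S₀, hS₀, rfl⟩
  exact ⟨S, hS, (ncard_iUnion_eq_card_labels S).symm.trans hcard⟩

theorem overlapNumber_le_of_embedding [Finite V] [Finite W] (f : G ↪g H) :
    overlapNumber G ≤ overlapNumber H := by
  have := Fintype.ofFinite V
  have := Fintype.ofFinite W
  obtain ⟨T, hT, hcard⟩ := exists_isOverlapRep_card_labels_eq H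
  calc overlapNumber G ≤ #(labels (T ∘ f)) := overlapNumber_le_card_labels (hT.comp_embedding f)
    _ ≤ #(labels T) := card_le_card (labels_comp_subset T f)
    _ = overlapNumber H := hcard

theorem overlapNumber_congr [Finite V] [Finite W] (f : G ≃g H) :
    overlapNumber G = overlapNumber H :=
  (overlapNumber_le_of_embedding f.toEmbedding).antisymm
    (overlapNumber_le_of_embedding f.symm.toEmbedding)

theorem overlapNumber_of_isEmpty [IsEmpty V] (G : SimpleGraph V) : overlapNumber G = 0 := by
  have := Fintype.ofIsEmpty (α := V)
  have hrep : IsOverlapRep G isEmptyElim := ⟨isEmptyElim, isEmptyElim⟩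
  simpa [labels] using overlapNumber_le_card_labels hrep

theorem overlapNumber_sum_add_one_le [Finite V] [Finite W] [Nonempty V] [Nonempty W]
    (G : SimpleGraph V) (H : SimpleGraph W) :
    overlapNumber (G ⊕g H) + 1 ≤ overlapNumber G + overlapNumber H := by
  have := Fintype.ofFinite V
  have := Fintype.ofFinite W
  obtain ⟨S, hS, hScard⟩ := exists_isOverlapRep_card_labels_eq G
  obtain ⟨T₀, hT₀, hT₀card⟩ := exists_isOverlapRep_card_labels_eq H
  obtain ⟨e, x, hx⟩ :=
    exists_embedding_inter_map_eq_singleton hS.labels_nonempty hT₀.labels_nonempty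
  let T (w : W) : Finset ℕ := (T₀ w).map e
  have hT : IsOverlapRep H T := hT₀.map e
  have hlabels : labels T = (labels T₀).map e := labels_map T₀ e
  have hTcard : #(labels T) = overlapNumber H := by rw [hlabels, card_map, hT₀card]
  rw [← hlabels] at hx
  have hxT : x ∈ labels T := (mem_inter.1 (hx ▸ mem_singleton_self x)).2
  obtain ⟨R, hR, hRT, hRsub⟩ := hS.exists_blowup hxT fun v =>
    (inter_subset_inter_right (subset_labels S v)).trans hx.subset
  have hle := overlapNumber_le_card_labels <| hR.sumElim hT fun v w =>
    not_overlaps_of_subset_or_disjoint (subset_labels T w) (hRT v)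
  have hsub : labels (Sum.elim R T) ⊆ labels S ∪ labels T :=
    labels_subset_iff.2 (Sum.forall.2
      ⟨fun v => (hRsub v).trans (union_subset_union_left (subset_labels S v)),
        fun w => (subset_labels T w).trans subset_union_right⟩)
  have hunion := card_union_add_card_inter (labels S) (labels T)
  rw [hx, card_singleton] at hunion
  have := card_le_card hsub
  omega

theorem overlapNumber_add_le_card_labels_union [Fintype V] [Fintype W] [Nonempty W]
    (hS : IsOverlapRep G S) (hT : IsOverlapRep H T)
    (hST : ∀ v, labels T ⊆ S v ∨ Disjoint (labels T) (S v)) :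
    overlapNumber G + overlapNumber H ≤ #(labels S ∪ labels T) + 1 := by
  obtain ⟨x, hx⟩ := hT.labels_nonempty
  have hG := overlapNumber_le_card_labels ((IsOverlapRep.sdiff_erase_iff hx hST).2 hS)
  have hH := overlapNumber_le_card_labels hT
  have hsub : labels (fun v => S v \ (labels T).erase x) ⊆
      (labels S ∪ labels T) \ (labels T).erase x :=
    labels_subset_iff.2 fun v =>
      sdiff_subset_sdiff ((subset_labels S v).trans subset_union_left) Subset.rfl
  have hcard := card_sdiff_add_card_eq_card
    ((erase_subset x (labels T)).trans (subset_union_right (s₁ := labels S)))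
  have := card_le_card hsub
  have := card_erase_add_one hx
  omega

end Representations

section Components

variable {V : Type*} {G : SimpleGraph V}

/-- The disjoint-sum decomposition of the graph induced on two vertex sets with no edges between
them. -/
noncomputable def inducedUnionIsoSum {A B : Set V} (hAB : Disjoint A B)
    (hadj : ∀ a ∈ A, ∀ b ∈ B, ¬G.Adj a b) :
    G.induce (A ∪ B) ≃g G.induce A ⊕g G.induce B :=
  open Classical in
  RelIso.symm
    { toEquiv := (Equiv.Set.union hAB).symm
      map_rel_iff' := by
        rintro (⟨u, hu⟩ | ⟨u, hu⟩) (⟨v, hv⟩ | ⟨v, hv⟩)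
        · simp
        · simpa using hadj u hu v hv
        · simpa [SimpleGraph.adj_comm] using hadj v hv u hu
        · simp }

theorem exists_overlapNumber_erase_add_supp_le [Finite V] [DecidableEq G.ConnectedComponent]
    {s : Finset G.ConnectedComponent}
    (hs : s.Nonempty) :
    ∃ c ∈ s, overlapNumber (G.induce (G.connectedComponentMk ⁻¹' (s.erase c))) +
      overlapNumber (G.induce c.supp) ≤
        overlapNumber (G.induce (G.connectedComponentMk ⁻¹' s)) + 1 := by
  classical
  have := Fintype.ofFinite V
  obtain ⟨S, hS, hcard⟩ :=
    exists_isOverlapRep_card_labels_eq (G.induce (G.connectedComponentMk ⁻¹' (s : Set _)))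
  have := hs.to_subtype
  have supp_subset (c : s) : c.1.supp ⊆ G.connectedComponentMk ⁻¹' s := by
    intro v hv
    rw [Set.mem_preimage, hv]
    exact c.2
  let incl (c : s) := G.induceHomOfLE (supp_subset c)
  have hcross (c d : s) (hcd : c ≠ d) (u : c.1.supp) (v : d.1.supp) :
      ¬Overlaps (S (incl c u)) (S (incl d v)) := fun h => by
    have hadj : G.Adj u v := (hS.2 (incl c u) (incl d v)).2 h
    have huv := SimpleGraph.ConnectedComponent.sound hadj.reachable
    exact hcd (Subtype.ext (u.2.symm.trans (huv.trans v.2)))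
  obtain ⟨c, hc⟩ := IsOverlapRep.exists_forall_subset_or_disjoint
    (fun c => hS.comp_embedding (incl c)) (fun c => c.1.connected_toSimpleGraph) hcross
  refine ⟨c, c.2, ?_⟩
  let rest := G.induceHomOfLE (Set.preimage_mono (f := G.connectedComponentMk)
    (coe_subset.2 (s.erase_subset c.1)))
  have := c.1.nonempty_supp.to_subtype
  have hle := overlapNumber_add_le_card_labels_union (hS.comp_embedding rest)
    (hS.comp_embedding (incl c)) fun w => by
      obtain ⟨hwc, hws⟩ := mem_erase.1 w.2
      rw [labels_subset_iff, disjoint_labels_left]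
      exact hc ⟨G.connectedComponentMk w, hws⟩ (Subtype.coe_ne_coe.1 hwc) ⟨w, rfl⟩
  have hsub := union_subset (labels_comp_subset S rest) (labels_comp_subset S (incl c))
  exact hle.trans (Nat.add_le_add_right ((card_le_card hsub).trans hcard.le) 1)

theorem overlapNumber_add_one_le_erase_add_supp [Finite V] [DecidableEq G.ConnectedComponent]
    {s : Finset G.ConnectedComponent}
    {c : G.ConnectedComponent} (hc : c ∈ s) (hs : (s.erase c).Nonempty) :
    overlapNumber (G.induce (G.connectedComponentMk ⁻¹' s)) + 1 ≤
      overlapNumber (G.induce (G.connectedComponentMk ⁻¹' (s.erase c))) +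
        overlapNumber (G.induce c.supp) := by
  have hunion : G.connectedComponentMk ⁻¹' s =
      G.connectedComponentMk ⁻¹' (s.erase c) ∪ c.supp := by
    ext v
    by_cases hv : G.connectedComponentMk v = c <;> simp [hv, hc]
  have hdisj : Disjoint (G.connectedComponentMk ⁻¹' (s.erase c)) c.supp :=
    Set.disjoint_left.2 fun v hv => (mem_erase.1 hv).1
  have hadj : ∀ a ∈ G.connectedComponentMk ⁻¹' (s.erase c), ∀ b ∈ c.supp, ¬G.Adj a b :=
    fun a ha b hb hab =>
      (mem_erase.1 ha).1 ((SimpleGraph.ConnectedComponent.sound hab.reachable).trans hb)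
  have := c.nonempty_supp.to_subtype
  have : Nonempty (G.connectedComponentMk ⁻¹' (s.erase c)) :=
    (Set.Nonempty.preimage hs Quot.mk_surjective).to_subtype
  rw [hunion, overlapNumber_congr (inducedUnionIsoSum hdisj hadj)]
  exact overlapNumber_sum_add_one_le _ _

theorem overlapNumber_induce_add_card [Finite V] (s : Finset G.ConnectedComponent)
    (hs : s.Nonempty) :
    overlapNumber (G.induce (G.connectedComponentMk ⁻¹' s)) + #s =
      ∑ c ∈ s, overlapNumber (G.induce c.supp) + 1 := by
  classical
  induction s using Finset.strongInduction with
  | H s ih =>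
    obtain ⟨c, hc, hlower⟩ := exists_overlapNumber_erase_add_supp_le hs
    rcases (s.erase c).eq_empty_or_nonempty with herase | herase
    · obtain rfl : s = {c} := by
        rw [← insert_erase hc, herase, insert_empty_eq]
      rw [coe_singleton, card_singleton, sum_singleton]
      rfl
    · have hupper := overlapNumber_add_one_le_erase_add_supp hc herase
      have hrest := ih (s.erase c) (erase_ssubset hc) herase
      have hcard := card_erase_add_one hc
      have hsum := add_sum_erase s (fun c => overlapNumber (G.induce c.supp)) hc
      omega

end Components

/-- If `G` has connected components `B₁, ..., B_k`, then
`φ(G) = Σᵢ φ(Bᵢ) − (k − 1)`. -/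
theorem overlapNumber_components {V : Type*} [Fintype V] (G : SimpleGraph V)
    [Fintype G.ConnectedComponent] :
    overlapNumber G =
      (∑ c : G.ConnectedComponent, overlapNumber (G.induce c.supp)) -
        (Fintype.card G.ConnectedComponent - 1) := by
  rcases isEmpty_or_nonempty V with hV | hV
  · have : IsEmpty G.ConnectedComponent := Quot.instIsEmpty
    simp [overlapNumber_of_isEmpty]
  · have : Nonempty G.ConnectedComponent := hV.map G.connectedComponentMk
    have hsum := overlapNumber_induce_add_card (G := G) univ univ_nonempty
    rw [coe_univ, Set.preimage_univ, overlapNumber_congr G.induceUnivIso, card_univ] at hsum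
    have := Fintype.card_pos (α := G.ConnectedComponent)
    omega
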